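/- arXiv:1407.5506 — 2 statements merged into one kernel-verified Lean document; each statement's English description precedes it below -/
import Mathlib

section
/- In the model of superfunctions on Minkowski superspacetime fixed in the context, the left-invariant odd derivatives satisfy, as operators on smooth maps f : ℝ⁴ → Λ: (i) D_a D_b + D_b D_a = 0 and D̄_a D̄_b + D̄_b D̄_a = 0 for all a,b ∈ {1,2}; (ii) D_a D̄_b + D̄_b D_a = −2i Σ_{μ=0}^{3} Γ^μ_{ab} ∂_μ for all a,b ∈ {1,2}; (iii) every one of D_a, D̄_a anticommutes with every one of Q_b, Q̄_b, i.e. Q_a D_b + D_b Q_a = 0, Q_a D̄_b + D̄_b Q_a = 0, Q̄_a D_b + D_b Q̄_a = 0, and Q̄_a D̄_b + D̄_b Q̄_a = 0 for all a,b ∈ {1,2}. -/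
noncomputable section

/-- Coordinates of the exterior algebra `Λ = ⋀(ℂ⁴)` with distinguished basis
`θ¹, θ², θ̄¹, θ̄²` (indexed `0,1,2,3`): an element is given by its coefficients on the
basis monomials `θ_S` (`S ⊆ {0,1,2,3}`, factors in increasing index order). -/
abbrev Lam : Type := Finset (Fin 4) → ℂ

/-- The Koszul sign `(−1)^{#{j ∈ S : j < i}}`. -/
def ksign (i : Fin 4) (S : Finset (Fin 4)) : ℂ := (-1 : ℂ) ^ (S.filter (· < i)).card

/-- Left exterior multiplication `e_v` by the `i`-th basis vector, in coordinates. -/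
def eOp (i : Fin 4) (a : Lam) : Lam := fun S =>
  if i ∈ S then ksign i S * a (S.erase i) else 0

/-- The odd derivation `∂_v` dual to the `i`-th basis vector (`∂_v(w) = δ_{v,w}` on basis
vectors, graded Leibniz rule), in coordinates. -/
def dOp (i : Fin 4) (a : Lam) : Lam := fun S =>
  if i ∈ S then 0 else ksign i S * a (insert i S)

/-- The matrices `Γ⁰ = I`, `Γ¹ = diag(1,−1)`, `Γ² = ((0,1),(1,0))`, `Γ³ = ((0,−i),(i,0))`. -/
def Gam : Fin 4 → Matrix (Fin 2) (Fin 2) ℂ :=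
  ![!![1, 0; 0, 1], !![1, 0; 0, -1], !![0, 1; 1, 0], !![0, -Complex.I; Complex.I, 0]]

/-- Index of `θ^a` (for `a ∈ {1,2}`, i.e. `a : Fin 2`). -/
def θi (a : Fin 2) : Fin 4 := ⟨a.val, by have := a.isLt; omega⟩

/-- Index of `θ̄^a` (for `a ∈ {1,2}`, i.e. `a : Fin 2`). -/
def θbi (a : Fin 2) : Fin 4 := ⟨a.val + 2, by have := a.isLt; omega⟩

/-- The partial derivative `∂_μ` of a superfunction `f : ℝ⁴ → Λ`. -/
def pd (μ : Fin 4) (f : (Fin 4 → ℝ) → Lam) : (Fin 4 → ℝ) → Lam :=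
  fun x => fderiv ℝ f x (Pi.single μ 1)

/-- The supersymmetry generator `Q_a = ∂_{θ^a} + i Σ_{μ,b} Γ^μ_{ab} e_{θ̄^b} ∂_μ`. -/
def QOp (a : Fin 2) (f : (Fin 4 → ℝ) → Lam) : (Fin 4 → ℝ) → Lam :=
  fun x => dOp (θi a) (f x) +
    ∑ μ : Fin 4, ∑ b : Fin 2, (Complex.I * Gam μ a b) • eOp (θbi b) (pd μ f x)

/-- The supersymmetry generator `Q̄_b = ∂_{θ̄^b} + i Σ_{μ,a} Γ^μ_{ab} e_{θ^a} ∂_μ`. -/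
def QbOp (b : Fin 2) (f : (Fin 4 → ℝ) → Lam) : (Fin 4 → ℝ) → Lam :=
  fun x => dOp (θbi b) (f x) +
    ∑ μ : Fin 4, ∑ a : Fin 2, (Complex.I * Gam μ a b) • eOp (θi a) (pd μ f x)


/-- The left-invariant odd derivative `D_a = ∂_{θ^a} − i Σ_{μ,b} Γ^μ_{ab} e_{θ̄^b} ∂_μ`. -/
def DOp (a : Fin 2) (f : (Fin 4 → ℝ) → Lam) : (Fin 4 → ℝ) → Lam :=
  fun x => dOp (θi a) (f x) -
    ∑ μ : Fin 4, ∑ b : Fin 2, (Complex.I * Gam μ a b) • eOp (θbi b) (pd μ f x)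

/-- The left-invariant odd derivative `D̄_b = ∂_{θ̄^b} − i Σ_{μ,a} Γ^μ_{ab} e_{θ^a} ∂_μ`. -/
def DbOp (b : Fin 2) (f : (Fin 4 → ℝ) → Lam) : (Fin 4 → ℝ) → Lam :=
  fun x => dOp (θbi b) (f x) -
    ∑ μ : Fin 4, ∑ a : Fin 2, (Complex.I * Gam μ a b) • eOp (θi a) (pd μ f x)


theorem ks_ee : ∀ (j l : Fin 4) (S : Finset (Fin 4)), j ∈ S → l ∈ S → j ≠ l →
    ((S.filter (· < j)).card + ((S.erase j).filter (· < l)).card + 1) % 2 =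
    ((S.filter (· < l)).card + ((S.erase l).filter (· < j)).card) % 2 := by decide

theorem ks_dd : ∀ (j l : Fin 4) (S : Finset (Fin 4)), j ∉ S → l ∉ S → j ≠ l →
    ((S.filter (· < j)).card + ((insert j S).filter (· < l)).card + 1) % 2 =
    ((S.filter (· < l)).card + ((insert l S).filter (· < j)).card) % 2 := by decide

theorem ks_de : ∀ (j l : Fin 4) (S : Finset (Fin 4)), j ∉ S → l ∈ S → j ≠ l →
    ((S.filter (· < j)).card + ((insert j S).filter (· < l)).card + 1) % 2 =
    ((S.filter (· < l)).card + ((S.erase l).filter (· < j)).card) % 2 := by decide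

theorem ks_same_i : ∀ (j : Fin 4) (S : Finset (Fin 4)),
    (insert j S).filter (· < j) = S.filter (· < j) := by decide

theorem ks_same_e : ∀ (j : Fin 4) (S : Finset (Fin 4)),
    (S.erase j).filter (· < j) = S.filter (· < j) := by decide

theorem sign_aux {m n : ℕ} (h : (m + 1) % 2 = n % 2) : (-1 : ℂ) ^ m + (-1) ^ n = 0 := by
  rw [neg_one_pow_eq_pow_mod_two (n := n), ← h, ← neg_one_pow_eq_pow_mod_two, pow_succ]
  ring

theorem sign_sq (m : ℕ) : (-1 : ℂ) ^ m * (-1) ^ m = 1 := by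
  rw [← mul_pow]; simp

theorem ee_rel (j l : Fin 4) (a : Lam) : eOp j (eOp l a) + eOp l (eOp j a) = 0 := by
  funext S
  simp only [eOp, Pi.add_apply, Pi.zero_apply, Finset.mem_erase]
  by_cases hjl : j = l
  · subst hjl; simp
  by_cases hj : j ∈ S <;> by_cases hl : l ∈ S <;> simp [hj, hl, hjl, Ne.symm hjl]
  have h := sign_aux (ks_ee j l S hj hl hjl)
  rw [Finset.erase_right_comm (a := j)]
  simp only [pow_add] at h
  unfold ksign
  linear_combination (a ((S.erase l).erase j)) * h

theorem dd_rel (j l : Fin 4) (a : Lam) : dOp j (dOp l a) + dOp l (dOp j a) = 0 := by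
  funext S
  simp only [dOp, Pi.add_apply, Pi.zero_apply, Finset.mem_insert]
  by_cases hjl : j = l
  · subst hjl; simp
  by_cases hj : j ∈ S <;> by_cases hl : l ∈ S <;> simp [hj, hl, hjl, Ne.symm hjl]
  have h := sign_aux (ks_dd j l S hj hl hjl)
  rw [Finset.insert_comm l j]
  simp only [pow_add] at h
  unfold ksign
  linear_combination (a (insert j (insert l S))) * h

theorem de_rel (j l : Fin 4) (a : Lam) :
    dOp j (eOp l a) + eOp l (dOp j a) = if l = j then a else 0 := by
  funext S
  simp only [dOp, eOp, Pi.add_apply, Finset.mem_insert, Finset.mem_erase]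
  by_cases hjl : j = l
  · subst hjl
    have h := sign_sq (S.filter (· < j)).card
    by_cases hj : j ∈ S <;> simp [hj, ksign, ks_same_i, ks_same_e, Finset.insert_erase] <;> linear_combination (a S) * h
  by_cases hj : j ∈ S <;> by_cases hl : l ∈ S <;> simp [hj, hl, hjl, Ne.symm hjl]
  have h := sign_aux (ks_de j l S hj hl hjl)
  rw [Finset.erase_insert_of_ne hjl]
  simp only [pow_add] at h
  unfold ksign
  linear_combination (a (insert j (S.erase l))) * h

/-- `eOp` as a continuous linear map. -/
def eL (i : Fin 4) : Lam →L[ℂ] Lam := LinearMap.toContinuousLinearMap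
  { toFun := eOp i
    map_add' := fun a b => by funext S; simp only [eOp, Pi.add_apply]; split_ifs <;> ring
    map_smul' := fun c a => by
      funext S; simp only [eOp, Pi.smul_apply, smul_eq_mul, RingHom.id_apply]
      split_ifs <;> ring }

/-- `dOp` as a continuous linear map. -/
def dL (i : Fin 4) : Lam →L[ℂ] Lam := LinearMap.toContinuousLinearMap
  { toFun := dOp i
    map_add' := fun a b => by funext S; simp only [dOp, Pi.add_apply]; split_ifs <;> ring
    map_smul' := fun c a => by
      funext S; simp only [dOp, Pi.smul_apply, smul_eq_mul, RingHom.id_apply]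
      split_ifs <;> ring }

theorem eL_apply (i : Fin 4) (a : Lam) : eL i a = eOp i a := rfl
theorem dL_apply (i : Fin 4) (a : Lam) : dL i a = dOp i a := rfl

/-- The general first-order odd operator `∂_i + Σ_{μ,j} c_{μ j} e_j ∂_μ`. -/
def GOp (i : Fin 4) (c : Fin 4 → Fin 4 → ℂ) (f : (Fin 4 → ℝ) → Lam) : (Fin 4 → ℝ) → Lam :=
  fun x => dL i (f x) + ∑ μ : Fin 4, ∑ j : Fin 4, c μ j • eL j (pd μ f x)

theorem pd_smooth (μ : Fin 4) {f : (Fin 4 → ℝ) → Lam} (hf : ContDiff ℝ (⊤ : ℕ∞) f) :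
    ContDiff ℝ (⊤ : ℕ∞) (pd μ f) :=
  (hf.fderiv_right (m := (⊤ : ℕ∞)) (by simp)).clm_apply contDiff_const

theorem pd_comm (μ ν : Fin 4) {f : (Fin 4 → ℝ) → Lam} (hf : ContDiff ℝ (⊤ : ℕ∞) f)
    (x : Fin 4 → ℝ) : pd μ (pd ν f) x = pd ν (pd μ f) x := by
  have hd : DifferentiableAt ℝ (fderiv ℝ f) x :=
    (hf.fderiv_right (m := (⊤ : ℕ∞)) (by simp)).differentiable (by simp) x
  have key : ∀ α β : Fin 4, pd α (pd β f) x =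
      fderiv ℝ (fderiv ℝ f) x (Pi.single α 1) (Pi.single β 1) := by
    intro α β
    have h : HasFDerivAt (pd β f) _ x :=
      hd.hasFDerivAt.clm_apply (hasFDerivAt_const (Pi.single β (1:ℝ) : Fin 4 → ℝ) x)
    unfold pd at h ⊢
    rw [h.fderiv]
    simp
  rw [key, key]
  exact (hf.contDiffAt.isSymmSndFDerivAt (by simpa using (WithTop.coe_le_coe.2 (le_top : (2 : ℕ∞) ≤ ⊤)))) _ _

theorem pd_clm (μ : Fin 4) (L : Lam →L[ℂ] Lam) {f : (Fin 4 → ℝ) → Lam} {x : Fin 4 → ℝ}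
    (hf : DifferentiableAt ℝ f x) : pd μ (fun y => L (f y)) x = L (pd μ f x) := by
  have h := ((L.restrictScalars ℝ).hasFDerivAt (x := f x)).comp x hf.hasFDerivAt
  have h2 : fderiv ℝ (fun y => L (f y)) x = _ := h.fderiv
  unfold pd
  rw [h2]; rfl

theorem pd_GOp (μ i : Fin 4) (c : Fin 4 → Fin 4 → ℂ) {f : (Fin 4 → ℝ) → Lam}
    (hf : ContDiff ℝ (⊤ : ℕ∞) f) (x : Fin 4 → ℝ) :
    pd μ (GOp i c f) x =
      dL i (pd μ f x) + ∑ ν : Fin 4, ∑ j : Fin 4, c ν j • eL j (pd ν (pd μ f) x) := by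
  have hd : ∀ {g : (Fin 4 → ℝ) → Lam}, ContDiff ℝ (⊤ : ℕ∞) g → DifferentiableAt ℝ g x :=
    fun hg => hg.differentiable (by simp) x
  have h1 : ∀ (L : Lam →L[ℂ] Lam) {g : (Fin 4 → ℝ) → Lam}, ContDiff ℝ (⊤ : ℕ∞) g →
      HasFDerivAt (fun y => L (g y)) (fderiv ℝ (fun y => L (g y)) x) x := fun L g hg =>
    (((L.restrictScalars ℝ).differentiableAt (x := g x)).comp x (hd hg)).hasFDerivAt
  have h2 : HasFDerivAt (GOp i c f) _ x :=
    (h1 (dL i) hf).add (HasFDerivAt.fun_sum (u := Finset.univ) fun ν _ =>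
      HasFDerivAt.fun_sum (u := Finset.univ) fun j _ =>
        (h1 (c ν j • eL j) (pd_smooth ν hf)))
  have h3 : pd μ (GOp i c f) x = pd μ (fun y => dL i (f y)) x +
      ∑ ν : Fin 4, ∑ j : Fin 4, pd μ (fun y => (c ν j • eL j) (pd ν f y)) x := by
    rw [pd, h2.fderiv]
    simp [pd]
  rw [h3, pd_clm μ _ (hd hf)]
  congr 1
  refine Finset.sum_congr rfl fun ν _ => Finset.sum_congr rfl fun j _ => ?_
  rw [pd_clm μ _ (hd (pd_smooth ν hf)), pd_comm μ ν hf]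
  rfl

theorem sum_swap4 (F : Fin 4 → Fin 4 → Fin 4 → Fin 4 → Lam) :
    (∑ μ, ∑ j, ∑ ν, ∑ l, F μ j ν l) = ∑ μ, ∑ j, ∑ ν, ∑ l, F ν l μ j := by
  have h := Finset.sum_comm (s := (Finset.univ : Finset (Fin 4 × Fin 4)))
    (t := (Finset.univ : Finset (Fin 4 × Fin 4))) (f := fun p q => F p.1 p.2 q.1 q.2)
  simpa only [Fintype.sum_prod_type] using h

theorem G_rel (i k : Fin 4) (c c' : Fin 4 → Fin 4 → ℂ) {f : (Fin 4 → ℝ) → Lam}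
    (hf : ContDiff ℝ (⊤ : ℕ∞) f) (x : Fin 4 → ℝ) :
    GOp i c (GOp k c' f) x + GOp k c' (GOp i c f) x =
      ∑ μ : Fin 4, (c' μ i + c μ k) • pd μ f x := by
  have hexp : ∀ (i k : Fin 4) (c c' : Fin 4 → Fin 4 → ℂ), GOp i c (GOp k c' f) x =
      dL i (dL k (f x)) + (∑ μ : Fin 4, ∑ j : Fin 4, c' μ j • dL i (eL j (pd μ f x))) +
      (∑ μ : Fin 4, ∑ j : Fin 4, c μ j • eL j (dL k (pd μ f x))) +
      ∑ μ : Fin 4, ∑ j : Fin 4, ∑ ν : Fin 4, ∑ l : Fin 4,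
        (c μ j * c' ν l) • eL j (eL l (pd ν (pd μ f) x)) := by
    intro i k c c'
    rw [GOp]
    simp only [pd_GOp _ _ _ hf]
    rw [GOp]
    simp only [map_add, map_sum, map_smul, smul_add, Finset.sum_add_distrib, Finset.smul_sum,
      smul_smul]
    abel
  have hdd := dd_rel i k (f x)
  have hde : ∀ (i : Fin 4) (c : Fin 4 → Fin 4 → ℂ),
      (∑ μ : Fin 4, ∑ j : Fin 4, c μ j • dL i (eL j (pd μ f x))) +
      (∑ μ : Fin 4, ∑ j : Fin 4, c μ j • eL j (dL i (pd μ f x))) =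
      ∑ μ : Fin 4, c μ i • pd μ f x := by
    intro i c
    simp only [← Finset.sum_add_distrib, ← smul_add, eL_apply, dL_apply, de_rel]
    simp
  have hee : (∑ μ : Fin 4, ∑ j : Fin 4, ∑ ν : Fin 4, ∑ l : Fin 4,
        (c μ j * c' ν l) • eL j (eL l (pd ν (pd μ f) x))) +
      (∑ μ : Fin 4, ∑ j : Fin 4, ∑ ν : Fin 4, ∑ l : Fin 4,
        (c' μ j * c ν l) • eL j (eL l (pd ν (pd μ f) x))) = 0 := by
    have hsw : (∑ μ : Fin 4, ∑ j : Fin 4, ∑ ν : Fin 4, ∑ l : Fin 4,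
        (c' μ j * c ν l) • eL j (eL l (pd ν (pd μ f) x))) =
        ∑ μ : Fin 4, ∑ j : Fin 4, ∑ ν : Fin 4, ∑ l : Fin 4,
        (c μ j * c' ν l) • eL l (eL j (pd ν (pd μ f) x)) := by
      rw [sum_swap4]
      refine Finset.sum_congr rfl fun μ _ => Finset.sum_congr rfl fun j _ =>
        Finset.sum_congr rfl fun ν _ => Finset.sum_congr rfl fun l _ => ?_
      rw [pd_comm μ ν hf, mul_comm]
    rw [hsw]
    simp only [← Finset.sum_add_distrib, ← smul_add, eL_apply, ee_rel]
    simp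
  rw [hexp, hexp]
  simp only [add_smul, Finset.sum_add_distrib, ← hde]
  rw [← dL_apply, ← dL_apply, ← dL_apply, ← dL_apply] at hdd
  linear_combination (exp := 1) hdd + hee

theorem DOp_eq (a : Fin 2) : DOp a =
    GOp (θi a) (fun μ => ![0, 0, -(Complex.I * Gam μ a 0), -(Complex.I * Gam μ a 1)]) := by
  funext f x
  simp only [DOp, GOp, Fin.sum_univ_two, eL_apply, dL_apply]
  simp [θbi, Fin.sum_univ_four, sub_eq_add_neg]
  try abel

theorem QOp_eq (a : Fin 2) : QOp a =
    GOp (θi a) (fun μ => ![0, 0, (Complex.I * Gam μ a 0), (Complex.I * Gam μ a 1)]) := by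
  funext f x
  simp only [QOp, GOp, Fin.sum_univ_two, eL_apply, dL_apply]
  simp [θbi, Fin.sum_univ_four, sub_eq_add_neg]
  try abel

theorem DbOp_eq (a : Fin 2) : DbOp a =
    GOp (θbi a) (fun μ => ![-(Complex.I * Gam μ 0 a), -(Complex.I * Gam μ 1 a), 0, 0]) := by
  funext f x
  simp only [DbOp, GOp, Fin.sum_univ_two, eL_apply, dL_apply]
  simp [θi, Fin.sum_univ_four, sub_eq_add_neg]
  try abel

theorem QbOp_eq (a : Fin 2) : QbOp a =
    GOp (θbi a) (fun μ => ![(Complex.I * Gam μ 0 a), (Complex.I * Gam μ 1 a), 0, 0]) := by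
  funext f x
  simp only [QbOp, GOp, Fin.sum_univ_two, eL_apply, dL_apply]
  simp [θi, Fin.sum_univ_four, sub_eq_add_neg]
  try abel

/-- the left-invariant odd derivatives satisfy, on smooth superfunctions
`f : ℝ⁴ → Λ`: (i) `{D_a, D_b} = 0` and `{D̄_a, D̄_b} = 0`;
(ii) `{D_a, D̄_b} = −2i Σ_μ Γ^μ_{ab} ∂_μ`; (iii) every `D_a`, `D̄_a` anticommutes with
every `Q_b`, `Q̄_b`. -/
theorem stmt9 (f : (Fin 4 → ℝ) → Lam) (hf : ContDiff ℝ (⊤ : ℕ∞) f) :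
    -- (i)
    (∀ a b : Fin 2, ∀ x, DOp a (DOp b f) x + DOp b (DOp a f) x = 0) ∧
    (∀ a b : Fin 2, ∀ x, DbOp a (DbOp b f) x + DbOp b (DbOp a f) x = 0) ∧
    -- (ii)
    (∀ a b : Fin 2, ∀ x, DOp a (DbOp b f) x + DbOp b (DOp a f) x =
      - ∑ μ : Fin 4, (2 * Complex.I * Gam μ a b) • pd μ f x) ∧
    -- (iii)
    (∀ a b : Fin 2, ∀ x, QOp a (DOp b f) x + DOp b (QOp a f) x = 0) ∧
    (∀ a b : Fin 2, ∀ x, QOp a (DbOp b f) x + DbOp b (QOp a f) x = 0) ∧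
    (∀ a b : Fin 2, ∀ x, QbOp a (DOp b f) x + DOp b (QbOp a f) x = 0) ∧
    (∀ a b : Fin 2, ∀ x, QbOp a (DbOp b f) x + DbOp b (QbOp a f) x = 0) := by
  refine ⟨?_, ?_, ?_, ?_, ?_, ?_, ?_⟩ <;> intro a b x <;>
    simp only [DOp_eq, DbOp_eq, QOp_eq, QbOp_eq, G_rel _ _ _ _ hf] <;>
    (try rw [← Finset.sum_neg_distrib]) <;>
    first
    | (refine Finset.sum_eq_zero fun μ _ => ?_
       fin_cases a <;> fin_cases b <;> simp [θi, θbi])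
    | (refine Finset.sum_congr rfl fun μ _ => ?_
       rw [← neg_smul]
       congr 1
       fin_cases a <;> fin_cases b <;> simp [θi, θbi] <;> ring)

end
end

section
/- With the notation of the context, the odd Fourier transform F_odd : ⋀Θ → ⋀T exchanges odd derivatives with exterior multiplication and exterior multiplication with odd derivatives: for every a ∈ {1,2} and every x ∈ ⋀Θ, (i) F_odd(∂_{θ^a} x) = i Σ_b ε_{ab} τ^b ∧ F_odd(x); (ii) F_odd(∂_{θ̄^a} x) = i Σ_b ε_{ab} τ̄^b ∧ F_odd(x); (iii) F_odd(θ^a ∧ x) = −i Σ_b ε^{ab} ∂_{τ^b}(F_odd(x)); (iv) F_odd(θ̄^a ∧ x) = −i Σ_b ε^{ab} ∂_{τ̄^b}(F_odd(x)). -/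
noncomputable section

/-- Coordinates of the exterior algebra `⋀(ℂ⁸)` with distinguished basis
`τ¹, τ², τ̄¹, τ̄², θ¹, θ², θ̄¹, θ̄²` (indexed `0,…,7`): an element is given by its
coefficients on the basis monomials `e_S` (`S ⊆ {0,…,7}`, factors in increasing index
order). Elements supported on subsets of `{0,1,2,3}` form `⋀T`, and elements supported
on subsets of `{4,5,6,7}` form `⋀Θ`. -/
abbrev Lam8 : Type := Finset (Fin 8) → ℂ

/-- The basis monomial `e_S` of `⋀(ℂ⁸)`. -/
def E8 (S : Finset (Fin 8)) : Lam8 := fun T => if T = S then 1 else 0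

/-- The Koszul sign `(−1)^{#{(a,b) ∈ A×B : b < a}}` with `e_A ∧ e_B = ± e_{A∪B}`. -/
def kz (A B : Finset (Fin 8)) : ℂ := (-1 : ℂ) ^ (∑ a ∈ A, (B.filter (· < a)).card)

/-- The wedge product of `⋀(ℂ⁸)`, in coordinates. -/
def wedge (f g : Lam8) : Lam8 := fun S =>
  ∑ A ∈ S.powerset, kz A (S \ A) * f A * g (S \ A)

/-- The Berezin integral `⋀(ℂ⁸) → ⋀T`: the coefficient of the top monomial
`θ¹∧θ²∧θ̄¹∧θ̄²` in the decomposition `Σ_I α_I ∧ θ_I`, `α_I ∈ ⋀T`. -/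
def Ber (f : Lam8) : Lam8 := fun S =>
  if S ⊆ ({0, 1, 2, 3} : Finset (Fin 8)) then f (S ∪ ({4, 5, 6, 7} : Finset (Fin 8))) else 0

/-- The factor `1 − i·τ¹∧θ² + i·τ²∧θ¹ + τ¹∧τ²∧θ¹∧θ²` of the Fourier kernel. -/
def Kplus : Lam8 :=
  E8 ∅ - Complex.I • E8 {0, 5} + Complex.I • E8 {1, 4} + E8 {0, 1, 4, 5}

/-- The factor `1 − i·τ̄¹∧θ̄² + i·τ̄²∧θ̄¹ + τ̄¹∧τ̄²∧θ̄¹∧θ̄²` of the Fourier kernel. -/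
def Kminus : Lam8 :=
  E8 ∅ - Complex.I • E8 {2, 7} + Complex.I • E8 {3, 6} + E8 {2, 3, 6, 7}

/-- The Fourier kernel `K`, the expansion of `exp(−i(ε₊(τ,θ) + ε₋(τ̄,θ̄)))`. -/
def Kker : Lam8 := wedge Kplus Kminus

/-- The odd Fourier transform `F_odd(a) = Ber(K ∧ a)`. -/
def Fodd (a : Lam8) : Lam8 := Ber (wedge Kker a)

/-- Index of `τ^a`. -/
def tI (a : Fin 2) : Fin 8 := ⟨a.val, by have := a.isLt; omega⟩
/-- Index of `τ̄^a`. -/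
def tbI (a : Fin 2) : Fin 8 := ⟨a.val + 2, by have := a.isLt; omega⟩
/-- Index of `θ^a`. -/
def thI (a : Fin 2) : Fin 8 := ⟨a.val + 4, by have := a.isLt; omega⟩
/-- Index of `θ̄^a`. -/
def thbI (a : Fin 2) : Fin 8 := ⟨a.val + 6, by have := a.isLt; omega⟩

/-- The odd derivation `∂_i` of the exterior algebra dual to the `i`-th basis vector
(`∂_i(e_j) = δ_{ij}`, graded Leibniz rule), in coordinates. -/
def dOp8 (i : Fin 8) (a : Lam8) : Lam8 := fun S =>
  if i ∈ S then 0 else (-1 : ℂ) ^ (S.filter (· < i)).card * a (insert i S)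

/-- The antisymmetric symbol `ε` with `ε₁₂ = −ε₂₁ = 1` (`0`-indexed). -/
def eps (a b : Fin 2) : ℂ :=
  if a = 0 ∧ b = 1 then 1 else if a = 1 ∧ b = 0 then -1 else 0

/-- `x ∈ ⋀Θ`: `x` is supported on the `θ`-indices `{4,5,6,7}`. -/
def inLamTheta (x : Lam8) : Prop :=
  ∀ S : Finset (Fin 8), x S ≠ 0 → S ⊆ ({4, 5, 6, 7} : Finset (Fin 8))

/-- The set of `θ`-indices paired with a set of `τ`-indices by the kernel. -/
def dualSet (S : Finset (Fin 8)) : Finset (Fin 8) := S.image ![5, 4, 7, 6, 0, 0, 0, 0]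

/-- The exponent of the Koszul sign. -/
def kzN (A B : Finset (Fin 8)) : ℕ := ∑ a ∈ A, (B.filter (· < a)).card

/-- Power of `I` of the kernel coefficient at `S ∪ dualSet S`. -/
def kN (S : Finset (Fin 8)) : ℕ :=
  (if 0 ∈ S ∧ 1 ∉ S then 3 else 0) + (if 1 ∈ S ∧ 0 ∉ S then 1 else 0) +
  (if 2 ∈ S ∧ 3 ∉ S then 3 else 0) + (if 3 ∈ S ∧ 2 ∉ S then 1 else 0) +
  2 * kzN ((S ∪ dualSet S) ∩ {0, 1, 4, 5}) ((S ∪ dualSet S) ∩ {2, 3, 6, 7})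

/-- The set of `τ`-indices. -/
abbrev tauSet : Finset (Fin 8) := {0, 1, 2, 3}

/-- The set of `θ`-indices. -/
abbrev thetaSet : Finset (Fin 8) := {4, 5, 6, 7}

/-- Power of `I` in the closed form of the transform. -/
def fN (S : Finset (Fin 8)) : ℕ :=
  kN S + 2 * kzN (S ∪ dualSet S) (thetaSet \ dualSet S)

lemma kz_eq (A B : Finset (Fin 8)) : kz A B = Complex.I ^ (2 * kzN A B) := by
  rw [pow_mul, Complex.I_sq]; rfl

lemma I_pow_congr {m n : ℕ} (h : m % 4 = n % 4) : Complex.I ^ m = Complex.I ^ n := by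
  rw [← Nat.div_add_mod m 4, ← Nat.div_add_mod n 4, h]
  simp [pow_add, pow_mul, Complex.I_pow_four]

lemma wedge_E8_left (B : Finset (Fin 8)) (g : Lam8) (S : Finset (Fin 8)) :
    wedge (E8 B) g S = if B ⊆ S then kz B (S \ B) * g (S \ B) else 0 := by
  unfold wedge E8
  simp only [mul_ite, mul_one, mul_zero, ite_mul, zero_mul, Finset.sum_ite_eq',
    Finset.mem_powerset]

lemma wedge_add_left (f₁ f₂ g : Lam8) : wedge (f₁ + f₂) g = wedge f₁ g + wedge f₂ g := by
  funext S
  simp only [wedge, Pi.add_apply, mul_add, add_mul, Finset.sum_add_distrib]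

lemma wedge_smul_left (c : ℂ) (f g : Lam8) : wedge (c • f) g = c • wedge f g := by
  funext S
  simp only [wedge, Pi.smul_apply, smul_eq_mul, Finset.mul_sum]
  exact Finset.sum_congr rfl fun _ _ => by ring

lemma wedge_add_right (f g₁ g₂ : Lam8) : wedge f (g₁ + g₂) = wedge f g₁ + wedge f g₂ := by
  funext S
  simp only [wedge, Pi.add_apply, mul_add, Finset.sum_add_distrib]

lemma wedge_smul_right (c : ℂ) (f g : Lam8) : wedge f (c • g) = c • wedge f g := by
  funext S
  simp only [wedge, Pi.smul_apply, smul_eq_mul, Finset.mul_sum]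
  exact Finset.sum_congr rfl fun _ _ => by ring

lemma wedge_zero_left (g : Lam8) : wedge 0 g = 0 := by
  funext S
  simp [wedge]

lemma wedge_sum_left {ι : Type} (s : Finset ι) (f : ι → Lam8) (g : Lam8) :
    wedge (∑ i ∈ s, f i) g = ∑ i ∈ s, wedge (f i) g := by
  classical
  induction s using Finset.induction_on with
  | empty => simp [wedge_zero_left]
  | insert a s ha ih => rw [Finset.sum_insert ha, Finset.sum_insert ha, wedge_add_left, ih]

lemma wedge_zero_right (g : Lam8) : wedge g 0 = 0 := by
  funext S
  simp [wedge]

lemma wedge_sum_right {ι : Type} (s : Finset ι) (f : ι → Lam8) (g : Lam8) :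
    wedge g (∑ i ∈ s, f i) = ∑ i ∈ s, wedge g (f i) := by
  classical
  induction s using Finset.induction_on with
  | empty => simp [wedge_zero_right]
  | insert a s ha ih => rw [Finset.sum_insert ha, Finset.sum_insert ha, wedge_add_right, ih]

lemma wedge_E8_E8 (A B : Finset (Fin 8)) (h : Disjoint A B) :
    wedge (E8 A) (E8 B) = kz A B • E8 (A ∪ B) := by
  funext S
  rw [wedge_E8_left]
  simp only [E8, Pi.smul_apply, smul_eq_mul, mul_ite, mul_one, mul_zero]
  by_cases hS : S = A ∪ B
  · subst hS
    simp [Finset.union_sdiff_cancel_left h]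
  · rw [if_neg hS]
    split_ifs with h1 h2
    · exact absurd (by rw [← h2, Finset.union_sdiff_of_subset h1]) hS
    · rfl
    · rfl

lemma Kplus_eq : Kplus = ∑ s ∈ ({0, 1} : Finset (Fin 8)).powerset,
    Complex.I ^ kN s • E8 (s ∪ dualSet s) := by
  have h : ({0, 1} : Finset (Fin 8)).powerset = {∅, {0}, {1}, {0, 1}} := by decide
  rw [h, Finset.sum_insert (by decide), Finset.sum_insert (by decide),
    Finset.sum_insert (by decide), Finset.sum_singleton]
  rw [show (∅ ∪ dualSet ∅) = ∅ by decide, show ({0} ∪ dualSet {0}) = {0, 5} by decide,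
    show ({1} ∪ dualSet {1}) = {1, 4} by decide,
    show ({0, 1} ∪ dualSet {0, 1}) = {0, 1, 4, 5} by decide,
    show kN ∅ = 0 by decide, show kN {0} = 3 by decide, show kN {1} = 1 by decide,
    show kN {0, 1} = 0 by decide, Complex.I_pow_three]
  unfold Kplus
  module

lemma Kminus_eq : Kminus = ∑ s ∈ ({2, 3} : Finset (Fin 8)).powerset,
    Complex.I ^ kN s • E8 (s ∪ dualSet s) := by
  have h : ({2, 3} : Finset (Fin 8)).powerset = {∅, {2}, {3}, {2, 3}} := by decide
  rw [h, Finset.sum_insert (by decide), Finset.sum_insert (by decide),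
    Finset.sum_insert (by decide), Finset.sum_singleton]
  rw [show (∅ ∪ dualSet ∅) = ∅ by decide, show ({2} ∪ dualSet {2}) = {2, 7} by decide,
    show ({3} ∪ dualSet {3}) = {3, 6} by decide,
    show ({2, 3} ∪ dualSet {2, 3}) = {2, 3, 6, 7} by decide,
    show kN ∅ = 0 by decide, show kN {2} = 3 by decide, show kN {3} = 1 by decide,
    show kN {2, 3} = 0 by decide, Complex.I_pow_three]
  unfold Kminus
  module

set_option maxRecDepth 100000 in
lemma Kker_eq : Kker = ∑ p ∈ ({0, 1} : Finset (Fin 8)).powerset ×ˢ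
    ({2, 3} : Finset (Fin 8)).powerset,
    Complex.I ^ kN (p.1 ∪ p.2) • E8 ((p.1 ∪ p.2) ∪ dualSet (p.1 ∪ p.2)) := by
  rw [Kker, Kplus_eq, Kminus_eq, wedge_sum_left, Finset.sum_product]
  refine Finset.sum_congr rfl fun s hs => ?_
  rw [wedge_sum_right]
  refine Finset.sum_congr rfl fun t ht => ?_
  have key : ∀ s ∈ ({0, 1} : Finset (Fin 8)).powerset, ∀ t ∈ ({2, 3} : Finset (Fin 8)).powerset,
      Disjoint (s ∪ dualSet s) (t ∪ dualSet t) ∧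
      (s ∪ dualSet s) ∪ (t ∪ dualSet t) = (s ∪ t) ∪ dualSet (s ∪ t) ∧
      (kN s + (kN t + 2 * kzN (s ∪ dualSet s) (t ∪ dualSet t))) % 4 = kN (s ∪ t) % 4 := by
    decide +kernel
  obtain ⟨h1, h2, h3⟩ := key s hs t ht
  rw [wedge_smul_left, wedge_smul_right, wedge_E8_E8 _ _ h1, kz_eq, smul_smul, smul_smul, h2,
    ← pow_add, ← pow_add, add_assoc, I_pow_congr h3]

lemma Fodd_of_not {S : Finset (Fin 8)} (y : Lam8) (h : ¬ S ⊆ tauSet) : Fodd y S = 0 := by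
  unfold Fodd Ber
  rw [if_neg h]

/-- Closed form of the odd Fourier transform on `⋀Θ`. -/
lemma Fodd_eq {S : Finset (Fin 8)} {y : Lam8} (hy : inLamTheta y) (h : S ⊆ tauSet) :
    Fodd y S = Complex.I ^ fN S * y (thetaSet \ dualSet S) := by
  have keyA : ∀ s ∈ ({0, 1} : Finset (Fin 8)).powerset,
      ∀ t ∈ ({2, 3} : Finset (Fin 8)).powerset, dualSet (s ∪ t) ⊆ thetaSet ∧
      s ∪ t ⊆ tauSet ∧ s = (s ∪ t) ∩ {0, 1} ∧ t = (s ∪ t) ∩ {2, 3} := by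
    decide +kernel
  have keyB : ∀ j : Fin 8, j ∈ tauSet → j ∉ thetaSet := by decide
  have key : ∀ s ∈ ({0, 1} : Finset (Fin 8)).powerset,
      ∀ t ∈ ({2, 3} : Finset (Fin 8)).powerset, (s ∪ t) ∪ dualSet (s ∪ t) ⊆ S ∪ thetaSet →
      (S ∪ thetaSet) \ ((s ∪ t) ∪ dualSet (s ∪ t)) ⊆ thetaSet →
      s = S ∩ {0, 1} ∧ t = S ∩ {2, 3} := by
    intro s hs t ht hsub hdiff
    obtain ⟨hd, hu, h1, h2⟩ := keyA s hs t ht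
    have hSu : S = s ∪ t := by
      apply Finset.Subset.antisymm
      · intro j hj
        by_contra hjn
        have hjt := keyB j (h hj)
        refine hjt (hdiff (Finset.mem_sdiff.2 ⟨Finset.mem_union_left _ hj, fun hc => ?_⟩))
        rcases Finset.mem_union.1 hc with hc | hc
        · exact hjn hc
        · exact hjt (hd hc)
      · intro j hj
        rcases Finset.mem_union.1 (hsub (Finset.mem_union_left _ hj)) with hc | hc
        · exact hc
        · exact absurd hc (keyB j (hu hj))
    rw [hSu]
    exact ⟨h1, h2⟩
  have key2 : ∀ S ∈ tauSet.powerset, (S ∩ {0, 1}) ∪ (S ∩ {2, 3}) = S ∧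
      S ∪ dualSet S ⊆ S ∪ thetaSet ∧
      (S ∪ thetaSet) \ (S ∪ dualSet S) = thetaSet \ dualSet S := by
    decide +kernel
  have hS := Finset.mem_powerset.2 h
  unfold Fodd Ber
  rw [if_pos h, Kker_eq, wedge_sum_left, Finset.sum_apply,
    Finset.sum_eq_single (S ∩ {0, 1}, S ∩ {2, 3})]
  · obtain ⟨h1, h2, h3⟩ := key2 S hS
    simp only [h1]
    rw [wedge_smul_left, Pi.smul_apply, wedge_E8_left, if_pos h2, h3, kz_eq, smul_eq_mul,
      ← mul_assoc, ← pow_add]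
    rfl
  · intro p hp hne
    rw [wedge_smul_left, Pi.smul_apply, wedge_E8_left]
    split_ifs with hsub
    · have h0 : y ((S ∪ thetaSet) \ ((p.1 ∪ p.2) ∪ dualSet (p.1 ∪ p.2))) = 0 := by
        by_contra hc
        obtain ⟨h1, h2⟩ := Finset.mem_product.1 hp
        obtain ⟨h3, h4⟩ := key p.1 h1 p.2 h2 hsub (hy _ hc)
        exact hne (Prod.ext h3 h4)
      rw [h0]; simp
    · simp
  · intro hn
    exact absurd (by simp [Finset.inter_subset_right]) hn

lemma inLamTheta_dOp8 {x : Lam8} (hx : inLamTheta x) (i : Fin 8) : inLamTheta (dOp8 i x) := by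
  intro S hS
  unfold dOp8 at hS
  split_ifs at hS with h
  · simp at hS
  · exact (Finset.subset_insert i S).trans (hx _ (right_ne_zero_of_mul hS))

lemma inLamTheta_wedge {x : Lam8} (hx : inLamTheta x) {i : Fin 8} (hi : i ∈ thetaSet) :
    inLamTheta (wedge (E8 {i}) x) := by
  intro S hS
  rw [wedge_E8_left] at hS
  split_ifs at hS with h
  · have h1 := hx _ (right_ne_zero_of_mul hS)
    intro j hj
    by_cases hji : j = i
    · exact hji ▸ hi
    · exact h1 (by simp [hj, hji])
  · simp at hS

/-- Derivative goes to multiplication, for a pair of indices `i` (theta) and `j` (tau). -/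
lemma fourier_d {x : Lam8} (hx : inLamTheta x) (i j : Fin 8) (n : ℕ) (hj : j ∈ tauSet)
    (key : ∀ S ∈ tauSet.powerset, (i ∈ thetaSet \ dualSet S ↔ j ∉ S) ∧ (j ∈ S →
      insert i (thetaSet \ dualSet S) = thetaSet \ dualSet (S \ {j}) ∧
      (fN S + 2 * ((thetaSet \ dualSet S).filter (· < i)).card) % 4 =
        (n + (2 * kzN {j} (S \ {j}) + fN (S \ {j}))) % 4)) :
    Fodd (dOp8 i x) = Complex.I ^ n • wedge (E8 {j}) (Fodd x) := by
  funext S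
  rw [Pi.smul_apply, wedge_E8_left, smul_eq_mul]
  by_cases hS : S ⊆ tauSet
  · obtain ⟨h1, h2⟩ := key S (Finset.mem_powerset.2 hS)
    rw [Fodd_eq (inLamTheta_dOp8 hx i) hS]
    unfold dOp8
    by_cases hjS : j ∈ S
    · obtain ⟨h3, h4⟩ := h2 hjS
      rw [if_neg (by rw [h1]; exact not_not.2 hjS), if_pos (by simpa using hjS),
        Fodd_eq hx (Finset.sdiff_subset.trans hS), kz_eq, h3, ← Complex.I_sq, ← pow_mul,
        ← mul_assoc, ← mul_assoc, ← mul_assoc, ← pow_add, ← pow_add, ← pow_add, add_assoc n,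
        I_pow_congr h4]
    · rw [if_pos (h1.2 hjS), if_neg (by simpa using hjS)]
      simp
  · rw [Fodd_of_not _ hS]
    split_ifs with h
    · rw [Fodd_of_not]
      · simp
      · intro hh
        apply hS
        intro k hk
        by_cases hkj : k = j
        · exact hkj ▸ hj
        · exact hh (by simp [hk, hkj])
    · simp

/-- Multiplication goes to derivative, for a pair of indices `i` (theta) and `j` (tau). -/
lemma fourier_m {x : Lam8} (hx : inLamTheta x) (i j : Fin 8) (n : ℕ) (hi : i ∈ thetaSet)
    (hj : j ∈ tauSet)
    (key : ∀ S ∈ tauSet.powerset, (i ∈ thetaSet \ dualSet S ↔ j ∉ S) ∧ (j ∉ S →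
      (thetaSet \ dualSet S) \ {i} = thetaSet \ dualSet (insert j S) ∧
      (fN S + 2 * kzN {i} ((thetaSet \ dualSet S) \ {i})) % 4 =
        (n + (2 * (S.filter (· < j)).card + fN (insert j S))) % 4)) :
    Fodd (wedge (E8 {i}) x) = Complex.I ^ n • dOp8 j (Fodd x) := by
  funext S
  rw [Pi.smul_apply, smul_eq_mul]
  unfold dOp8
  by_cases hS : S ⊆ tauSet
  · obtain ⟨h1, h2⟩ := key S (Finset.mem_powerset.2 hS)
    rw [Fodd_eq (inLamTheta_wedge hx hi) hS, wedge_E8_left]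
    by_cases hjS : j ∈ S
    · rw [if_pos hjS, if_neg (by rw [Finset.singleton_subset_iff, h1]; exact not_not.2 hjS)]
      simp
    · obtain ⟨h3, h4⟩ := h2 hjS
      rw [if_neg hjS, if_pos (by rw [Finset.singleton_subset_iff, h1]; exact hjS),
        Fodd_eq hx (Finset.insert_subset hj hS), kz_eq, ← Complex.I_sq, ← pow_mul,
        ← mul_assoc, ← mul_assoc, ← mul_assoc, ← pow_add, ← pow_add, ← pow_add, add_assoc n,
        I_pow_congr h4, h3]
  · rw [Fodd_of_not _ hS]
    split_ifs with h
    · simp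
    · rw [Fodd_of_not]
      · simp
      · exact fun hh => hS ((Finset.subset_insert j S).trans hh)

/-- the odd Fourier transform `F_odd : ⋀Θ → ⋀T` exchanges odd derivatives
with exterior multiplication and exterior multiplication with odd derivatives: for
`a ∈ {1,2}` and `x ∈ ⋀Θ`, (i) `F_odd(∂_{θ^a} x) = i Σ_b ε_{ab} τ^b ∧ F_odd(x)`;
(ii) `F_odd(∂_{θ̄^a} x) = i Σ_b ε_{ab} τ̄^b ∧ F_odd(x)`;
(iii) `F_odd(θ^a ∧ x) = −i Σ_b ε^{ab} ∂_{τ^b}(F_odd x)`;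
(iv) `F_odd(θ̄^a ∧ x) = −i Σ_b ε^{ab} ∂_{τ̄^b}(F_odd x)`. -/
theorem stmt14 (a : Fin 2) (x : Lam8) (hx : inLamTheta x) :
    Fodd (dOp8 (thI a) x) =
      ∑ b : Fin 2, (Complex.I * eps a b) • wedge (E8 {tI b}) (Fodd x) ∧
    Fodd (dOp8 (thbI a) x) =
      ∑ b : Fin 2, (Complex.I * eps a b) • wedge (E8 {tbI b}) (Fodd x) ∧
    Fodd (wedge (E8 {thI a}) x) =
      ∑ b : Fin 2, (-Complex.I * eps a b) • dOp8 (tI b) (Fodd x) ∧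
    Fodd (wedge (E8 {thbI a}) x) =
      ∑ b : Fin 2, (-Complex.I * eps a b) • dOp8 (tbI b) (Fodd x) := by
  have e00 : eps 0 0 = 0 := by simp [eps]
  have e01 : eps 0 1 = 1 := by simp [eps]
  have e10 : eps 1 0 = -1 := by simp [eps]
  have e11 : eps 1 1 = 0 := by simp [eps]
  have i3 : Complex.I ^ 3 = -Complex.I := Complex.I_pow_three
  refine ⟨?_, ?_, ?_, ?_⟩ <;> rw [Fin.sum_univ_two]
  · fin_cases a
    · have := fourier_d hx (thI 0) (tI 1) 1 (by decide) (by decide +kernel)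
      simpa [e00, e01] using this
    · have := fourier_d hx (thI 1) (tI 0) 3 (by decide) (by decide +kernel)
      simpa [e10, e11, i3] using this
  · fin_cases a
    · have := fourier_d hx (thbI 0) (tbI 1) 1 (by decide) (by decide +kernel)
      simpa [e00, e01] using this
    · have := fourier_d hx (thbI 1) (tbI 0) 3 (by decide) (by decide +kernel)
      simpa [e10, e11, i3] using this
  · fin_cases a
    · have := fourier_m hx (thI 0) (tI 1) 3 (by decide) (by decide) (by decide +kernel)
      simpa [e00, e01, i3] using this
    · have := fourier_m hx (thI 1) (tI 0) 1 (by decide) (by decide) (by decide +kernel)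
      simpa [e10, e11] using this
  · fin_cases a
    · have := fourier_m hx (thbI 0) (tbI 1) 3 (by decide) (by decide) (by decide +kernel)
      simpa [e00, e01, i3] using this
    · have := fourier_m hx (thbI 1) (tbI 0) 1 (by decide) (by decide) (by decide +kernel)
      simpa [e10, e11] using this

end
end
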